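/- Let d be a positive integer and let 0 < x₀ < t₀ < 1 be real numbers with d·F(x₀,t₀) + H(x₀) < 0. Then the proportion of perfect matchings M of the set {1,…,N}×{1,…,d} such that every nonempty subset U ⊆ {1,…,N} with |U| ≤ x₀·N satisfies e_M[U] ≤ (t₀·d/2)·|U|, tends to 1 as N → ∞ along integers N with N·d even. -/

import Mathlib

/-- `P` is a perfect matching of `α`: a set of non-diagonal unordered pairs such that
every element of `α` belongs to exactly one pair. -/
def IsPerfectMatching {α : Type*} (P : Set (Sym2 α)) : Prop :=
  (∀ e ∈ P, ¬ e.IsDiag) ∧ ∀ x : α, ∃! e, e ∈ P ∧ x ∈ e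

/-- The number of pairs of the matching `P` both of whose elements have first
coordinate in `U`. -/
noncomputable def pairsIn {α β : Type*} (P : Set (Sym2 (α × β))) (U : Set α) : ℕ :=
  {e ∈ P | ∀ x ∈ e, x.1 ∈ U}.ncard

/-- `h x = -x log x` (with `h 0 = 0`, since `Real.log 0 = 0`). -/
noncomputable def entH (x : ℝ) : ℝ := -x * Real.log x

/-- `H x = h x + h (1 - x)`. -/
noncomputable def entHH (x : ℝ) : ℝ := entH x + entH (1 - x)

/-- The rate function `F(x,t)`. -/
noncomputable def entF (x t : ℝ) : ℝ :=
  (1 / 2) * entH (t * x) + entH ((1 - t) * x) + (1 / 2) * entH (1 - (2 - t) * x) - entHH x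

section

open Finset

/-- The number of pairs of `P` contained in `S`. -/
noncomputable def innerPairs {α : Type*} (P : Set (Sym2 α)) (S : Set α) : ℕ :=
  {e ∈ P | ∀ x ∈ e, x ∈ S}.ncard

theorem IsPerfectMatching.exists_equiv {α : Type*} {P : Set (Sym2 α)} (hP : IsPerfectMatching P) :
    ∃ φ : P × Bool ≃ α, ∀ e : P, (e : Sym2 α) = s(φ (e, true), φ (e, false)) := by
  have hout : ∀ e : Sym2 α, s((Quot.out e).1, (Quot.out e).2) = e := fun e => Quot.out_eq e
  let f : P × Bool → α := fun p => if p.2 then (Quot.out p.1.1).1 else (Quot.out p.1.1).2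
  have hf : ∀ e : P, (e : Sym2 α) = s(f (e, true), f (e, false)) := fun e => by
    simp [f, hout]
  have hmem : ∀ p : P × Bool, f p ∈ (p.1 : Sym2 α) := by
    rintro ⟨e, b⟩
    rw [hf e]
    cases b <;> simp
  have hbij : Function.Bijective f := by
    constructor
    · rintro ⟨e, b⟩ ⟨e', b'⟩ h
      have he : e = e' := Subtype.ext <|
        (hP.2 (f (e, b))).unique ⟨e.2, hmem (e, b)⟩ ⟨e'.2, h ▸ hmem (e', b')⟩
      subst he
      have hne : f (e, true) ≠ f (e, false) := fun h' => hP.1 e e.2 <| by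
        rw [hf e]; exact h'
      cases b <;> cases b'
      · rfl
      · exact absurd h.symm hne
      · exact absurd h hne
      · rfl
    · intro x
      obtain ⟨e, ⟨he, hx⟩, -⟩ := hP.2 x
      replace hx : x ∈ s(f (⟨e, he⟩, true), f (⟨e, he⟩, false)) := hf ⟨e, he⟩ ▸ hx
      rw [Sym2.mem_iff] at hx
      rcases hx with hx | hx
      · exact ⟨_, hx.symm⟩
      · exact ⟨_, hx.symm⟩
  exact ⟨Equiv.ofBijective f hbij, hf⟩

theorem IsPerfectMatching.sum_pow_card_mul_pow_innerPairs {α : Type*} [Fintype α]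
    {P : Set (Sym2 α)} (hP : IsPerfectMatching P) {m : ℕ} (hm : Fintype.card α = 2 * m)
    (q r : ℝ) :
    ∑ S : Finset α, q ^ #S * r ^ innerPairs P S = (1 + 2 * q + q ^ 2 * r) ^ m := by
  classical
  obtain ⟨φ, hφ⟩ := hP.exists_equiv
  have hcard : Fintype.card P = m := by
    have := Fintype.card_congr φ
    simp only [Fintype.card_prod, Fintype.card_bool] at this
    omega
  let ψ : Finset α ≃ (P → Bool × Bool) :=
    { toFun := fun S e => (decide (φ (e, true) ∈ S), decide (φ (e, false) ∈ S))
      invFun := fun g => univ.filter fun x =>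
        (if (φ.symm x).2 then (g (φ.symm x).1).1 else (g (φ.symm x).1).2) = true
      left_inv := fun S => by
        ext x
        obtain ⟨⟨e, b⟩, rfl⟩ := φ.surjective x
        cases b <;> simp
      right_inv := fun g => by
        ext e <;> simp }
  let w : Bool × Bool → ℝ := fun p =>
    (if p.1 then q else 1) * (if p.2 then q else 1) * (if p.1 ∧ p.2 then r else 1)
  have hw : ∑ p, w p = 1 + 2 * q + q ^ 2 * r := by
    simp [Fintype.sum_prod_type, w]
    ring
  have hS : ∀ S : Finset α, q ^ #S * r ^ innerPairs P S = ∏ e, w (ψ S e) := by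
    intro S
    have h1 : q ^ #S = ∏ e : P,
        (if φ (e, true) ∈ S then q else 1) * (if φ (e, false) ∈ S then q else 1) := by
      rw [← Finset.prod_const, ← Fintype.prod_ite_mem, ← φ.prod_comp, Fintype.prod_prod_type]
      simp
    have h2 : r ^ innerPairs P S = ∏ e : P,
        (if φ (e, true) ∈ S ∧ φ (e, false) ∈ S then r else 1) := by
      rw [Finset.prod_ite, prod_const, prod_const_one, mul_one]
      congr 1
      rw [innerPairs, ← Set.ncard_coe_finset,
        ← Set.ncard_image_of_injective _ Subtype.val_injective]
      congr 1
      ext e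
      constructor
      · rintro ⟨he, h⟩
        refine ⟨⟨e, he⟩, ?_, rfl⟩
        have := hφ ⟨e, he⟩
        simp only at this
        rw [this] at h
        simpa using h
      · rintro ⟨e, he, rfl⟩
        refine ⟨e.2, ?_⟩
        rw [hφ e]
        simpa using he
    rw [h1, h2, ← Finset.prod_mul_distrib]
    simp [ψ, w]
  rw [Finset.sum_congr rfl fun S _ => hS S, Equiv.sum_comp ψ fun g => ∏ e, w (g e),
    ← Fintype.piFinset_univ, ← Finset.prod_univ_sum, Finset.prod_const, hw, Finset.card_univ,
    hcard]

theorem IsPerfectMatching.card_filter_innerPairs_mul_le {α : Type*} [Fintype α]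
    {P : Set (Sym2 α)} (hP : IsPerfectMatching P) {m : ℕ} (hm : Fintype.card α = 2 * m)
    {q r : ℝ} (hq : 0 < q) (hr : 1 ≤ r) (k : ℕ) (s : ℝ) :
    (#((powersetCard k univ).filter fun S : Finset α => s ≤ innerPairs P (S : Set α)) : ℝ) *
      (q ^ k * r ^ s) ≤ (1 + 2 * q + q ^ 2 * r) ^ m := by
  have hr0 : 0 < r := by linarith
  rw [← hP.sum_pow_card_mul_pow_innerPairs hm, ← nsmul_eq_mul]
  refine (Finset.card_nsmul_le_sum _ (fun S : Finset α => q ^ #S * r ^ innerPairs P S) _ ?_).trans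
    (Finset.sum_le_sum_of_subset_of_nonneg (Finset.subset_univ _) fun S _ _ => by positivity)
  intro S hS
  rw [Finset.mem_filter, Finset.mem_powersetCard] at hS
  rw [hS.1.2, ← Real.rpow_natCast r]
  gcongr
  exact hS.2

theorem IsPerfectMatching.image {α β : Type*} {P : Set (Sym2 α)} (hP : IsPerfectMatching P)
    (π : α ≃ β) : IsPerfectMatching (Sym2.map π '' P) := by
  refine ⟨?_, fun x => ?_⟩
  · rintro _ ⟨e, he, rfl⟩
    rw [Sym2.isDiag_map π.injective]
    exact hP.1 e he
  · obtain ⟨e, ⟨he, hx⟩, huniq⟩ := hP.2 (π.symm x)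
    refine ⟨Sym2.map π e, ⟨⟨e, he, rfl⟩, Sym2.mem_map.2 ⟨_, hx, by simp⟩⟩, ?_⟩
    rintro _ ⟨⟨e', he', rfl⟩, hx'⟩
    obtain ⟨y, hy, rfl⟩ := Sym2.mem_map.1 hx'
    rw [huniq e' ⟨he', by simpa using hy⟩]

theorem innerPairs_image {α : Type*} (P : Set (Sym2 α)) (π : Equiv.Perm α) {S T : Set α}
    (h : ∀ x, π x ∈ T ↔ x ∈ S) : innerPairs (Sym2.map π '' P) T = innerPairs P S := by
  rw [innerPairs, innerPairs,
    ← Set.ncard_image_of_injective {e ∈ P | ∀ x ∈ e, x ∈ S} (Sym2.map.injective π.injective)]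
  congr 1
  ext e
  constructor
  · rintro ⟨⟨e, he, rfl⟩, hT⟩
    exact ⟨e, ⟨he, fun x hx => (h x).1 (hT _ (Sym2.mem_map.2 ⟨x, hx, rfl⟩))⟩, rfl⟩
  · rintro ⟨e, ⟨he, hS⟩, rfl⟩
    refine ⟨⟨e, he, rfl⟩, fun y hy => ?_⟩
    obtain ⟨x, hx, rfl⟩ := Sym2.mem_map.1 hy
    exact (h x).2 (hS x hx)

theorem card_matchings_innerPairs_le {α : Type*} [Fintype α] {S T : Finset α} (hST : #S = #T)
    (s : ℝ) :
    Nat.card {P : Set (Sym2 α) // IsPerfectMatching P ∧ s ≤ innerPairs P (S : Set α)} ≤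
      Nat.card {P : Set (Sym2 α) // IsPerfectMatching P ∧ s ≤ innerPairs P (T : Set α)} := by
  classical
  have hmem : ∀ x, (Finset.equivOfCardEq hST).extendSubtype x ∈ T ↔ x ∈ S := fun x =>
    ⟨fun h => by_contra fun hx => Equiv.extendSubtype_not_mem _ x hx h,
      fun h => Equiv.extendSubtype_mem _ x h⟩
  set π := (Finset.equivOfCardEq hST).extendSubtype
  refine Nat.card_le_card_of_injective
    (fun P => ⟨Sym2.map π '' P.1, P.2.1.image π, ?_⟩) fun P Q hPQ => ?_
  · rw [innerPairs_image P.1 π (S := S) hmem]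
    exact P.2.2
  · exact Subtype.ext (Set.image_injective.2 (Sym2.map.injective π.injective)
      (congrArg Subtype.val hPQ))

/-- Averaging over all sets of the same size and an exponential Markov inequality bound the
number of matchings with many pairs inside a given set. -/
theorem card_matchings_innerPairs_mul_le {α : Type*} [Fintype α] {m : ℕ}
    (hm : Fintype.card α = 2 * m) {q r : ℝ} (hq : 0 < q) (hr : 1 ≤ r) (S : Finset α) (s : ℝ) :
    (Nat.card {P : Set (Sym2 α) // IsPerfectMatching P ∧ s ≤ innerPairs P (S : Set α)} : ℝ) *
        ((2 * m).choose #S * (q ^ #S * r ^ s)) ≤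
      Nat.card {P : Set (Sym2 α) // IsPerfectMatching P} * (1 + 2 * q + q ^ 2 * r) ^ m := by
  classical
  have hcard : ∀ (p : Set (Sym2 α) → Prop) [DecidablePred p],
      Nat.card {P // p P} = #{P : Set (Sym2 α) | p P} :=
    fun p _ => Nat.subtype_card _ (by simp)
  let good : Finset (Set (Sym2 α)) := {P | IsPerfectMatching P}
  let sets := powersetCard #S (univ : Finset α)
  have hdouble : (2 * m).choose #S *
      Nat.card {P : Set (Sym2 α) // IsPerfectMatching P ∧ s ≤ innerPairs P (S : Set α)} =
      ∑ P ∈ good, #(sets.filter fun T : Finset α => s ≤ innerPairs P (T : Set α)) := by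
    have h1 : ∀ T ∈ sets, #{P ∈ good | s ≤ innerPairs P (T : Set α)} =
        Nat.card {P : Set (Sym2 α) // IsPerfectMatching P ∧ s ≤ innerPairs P (S : Set α)} := by
      intro T hT
      have hT' : #T = #S := (Finset.mem_powersetCard.1 hT).2
      rw [Finset.filter_filter, ← hcard]
      exact le_antisymm (card_matchings_innerPairs_le hT' s)
        (card_matchings_innerPairs_le hT'.symm s)
    rw [← hm, ← Finset.card_univ, ← Finset.card_powersetCard, ← smul_eq_mul,
      ← Finset.sum_const, ← Finset.sum_congr rfl h1]
    exact Finset.sum_card_bipartiteAbove_eq_sum_card_bipartiteBelow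
      fun (T : Finset α) (P : Set (Sym2 α)) => s ≤ innerPairs P (T : Set α)
  calc _ = (((2 * m).choose #S * Nat.card {P : Set (Sym2 α) // IsPerfectMatching P ∧
          s ≤ innerPairs P (S : Set α)} : ℕ) : ℝ) * (q ^ #S * r ^ s) := by
        push_cast; ring
    _ = ∑ P ∈ good, (#(sets.filter fun T : Finset α => s ≤ innerPairs P (T : Set α)) : ℝ) *
          (q ^ #S * r ^ s) := by
        rw [hdouble, Nat.cast_sum, Finset.sum_mul]
    _ ≤ ∑ P ∈ good, (1 + 2 * q + q ^ 2 * r) ^ m := Finset.sum_le_sum fun P hP =>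
        (Finset.mem_filter.1 hP).2.card_filter_innerPairs_mul_le hm hq hr _ s
    _ = _ := by rw [Finset.sum_const, nsmul_eq_mul, hcard]

theorem exists_isPerfectMatching {α : Type*} [Fintype α] (h : Even (Fintype.card α)) :
    ∃ P : Set (Sym2 α), IsPerfectMatching P := by
  obtain ⟨m, hm⟩ := h
  have e : Fin m × Bool ≃ α := Fintype.equivOfCardEq (by simp [hm, mul_two])
  have h0 : IsPerfectMatching (Set.range fun i : Fin m => s((i, true), (i, false))) := by
    refine ⟨?_, ?_⟩
    · rintro _ ⟨i, rfl⟩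
      simp
    · rintro ⟨i, b⟩
      refine ⟨s((i, true), (i, false)), ⟨⟨i, rfl⟩, by cases b <;> simp⟩, ?_⟩
      rintro _ ⟨⟨j, rfl⟩, hj⟩
      simp only [Sym2.mem_iff, Prod.mk.injEq] at hj
      obtain rfl : i = j := by tauto
      rfl
  exact ⟨_, h0.image e⟩

theorem choose_mul_pow_mul_pow_le (a b j : ℕ) (hj : j ≤ a + b) :
    (a + b).choose j * (a ^ j * b ^ (a + b - j)) ≤ (a + b).choose a * (a ^ a * b ^ b) := by
  set T : ℕ → ℕ := fun j => (a + b).choose j * (a ^ j * b ^ (a + b - j)) with hT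
  have hTa : (a + b).choose a * (a ^ a * b ^ b) = T a := by simp [hT]
  have hrec : ∀ i < a + b, T i * ((a + b - i) * a) = T (i + 1) * ((i + 1) * b) := by
    intro i hi
    have h1 := Nat.choose_succ_right_eq (a + b) i
    have h2 : a + b - i = a + b - (i + 1) + 1 := by omega
    simp only [hT]
    calc _ = ((a + b).choose i * (a + b - i)) * (a ^ (i + 1) * b ^ (a + b - i)) := by ring
      _ = _ := by rw [← h1, h2, pow_succ b]; ring
  change T j ≤ _
  rw [hTa]
  rcases le_total j a with h | h
  · refine Nat.decreasingInduction' (P := fun i => T i ≤ T a) (fun i hi _ ih => ?_) h le_rfl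
    refine le_trans ?_ ih
    have hpos : 0 < (a + b - i) * a := Nat.mul_pos (by omega) (by omega)
    refine Nat.le_of_mul_le_mul_right ?_ hpos
    rw [hrec i (by omega)]
    refine Nat.mul_le_mul_left _ ?_
    obtain ⟨c, rfl⟩ := Nat.exists_eq_add_of_lt hi
    have : i + c + 1 + b - i = c + 1 + b := by omega
    rw [this]
    nlinarith [Nat.zero_le (c * c), Nat.zero_le (c * i)]
  · induction j, h using Nat.le_induction with
    | base => exact le_rfl
    | succ i hi ih =>
      refine le_trans ?_ (ih (by omega))
      have hpos : 0 < (i + 1) * b := Nat.mul_pos (by omega) (by omega)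
      refine Nat.le_of_mul_le_mul_right ?_ hpos
      rw [← hrec i (by omega)]
      refine Nat.mul_le_mul_left _ ?_
      obtain ⟨c, rfl⟩ := Nat.exists_eq_add_of_le hi
      obtain ⟨e, rfl⟩ := Nat.exists_eq_add_of_lt (show c < b by omega)
      have : a + (c + e + 1) - (a + c) = e + 1 := by omega
      rw [this]
      nlinarith [Nat.zero_le (c * c), Nat.zero_le (c * e), Nat.zero_le (a * c)]

/-- The central term of the binomial distribution with mean `a` is at least the average one. -/
theorem pow_le_succ_mul_choose (a b : ℕ) :
    (a + b) ^ (a + b) ≤ (a + b + 1) * ((a + b).choose a * (a ^ a * b ^ b)) := by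
  calc (a + b) ^ (a + b)
      = ∑ j ∈ range (a + b + 1), (a + b).choose j * (a ^ j * b ^ (a + b - j)) := by
        rw [add_pow]
        exact Finset.sum_congr rfl fun j _ => by rw [Nat.cast_id]; ring
    _ ≤ ∑ j ∈ range (a + b + 1), (a + b).choose a * (a ^ a * b ^ b) :=
        Finset.sum_le_sum fun j hj => choose_mul_pow_mul_pow_le a b j
          (Nat.lt_succ_iff.1 (Finset.mem_range.1 hj))
    _ = _ := by simp

theorem one_le_succ_mul_choose_mul {n k : ℕ} (hk : k ≤ n) {x : ℝ} (hx : (k : ℝ) = n * x) :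
    1 ≤ (n + 1) * (n.choose k * (x ^ k * (1 - x) ^ (n - k))) := by
  obtain ⟨b, rfl⟩ := Nat.exists_eq_add_of_le hk
  rcases Nat.eq_zero_or_pos (k + b) with h0 | h0
  · obtain ⟨rfl, rfl⟩ : k = 0 ∧ b = 0 := by omega
    simp
  have hn : (0 : ℝ) < (k + b : ℕ) := by exact_mod_cast h0
  have hb : (b : ℝ) = (k + b : ℕ) * (1 - x) := by
    rw [mul_sub, ← hx]; push_cast; ring
  have h := pow_le_succ_mul_choose k b
  have h' : ((k + b : ℕ) : ℝ) ^ (k + b) ≤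
      (((k + b : ℕ) : ℝ) + 1) * ((k + b).choose k * ((k : ℝ) ^ k * (b : ℝ) ^ b)) := by
    exact_mod_cast h
  rw [hb, hx, mul_pow, mul_pow] at h'
  rw [Nat.add_sub_cancel_left]
  generalize hnn : ((k + b : ℕ) : ℝ) = n at *
  refine le_of_mul_le_mul_right ?_ (pow_pos hn (k + b))
  rw [one_mul]
  refine h'.trans (le_of_eq ?_)
  rw [pow_add]; ring

theorem choose_mul_pow_mul_pow_le_add_pow (n k : ℕ) (hk : k ≤ n) {x y : ℝ} (hx : 0 ≤ x)
    (hy : 0 ≤ y) : n.choose k * (x ^ k * y ^ (n - k)) ≤ (x + y) ^ n := by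
  rw [add_pow]
  refine le_trans (le_of_eq ?_) (Finset.single_le_sum
    (f := fun j => x ^ j * y ^ (n - j) * (n.choose j : ℝ)) (fun j _ => by positivity)
    (Finset.mem_range.2 (Nat.lt_succ_of_le hk)))
  ring

theorem pow_le_pow_mul_choose {n k : ℕ} (hk : k ≤ n) : n ^ k ≤ k ^ k * n.choose k := by
  induction k generalizing n with
  | zero => simp
  | succ k ih =>
    obtain ⟨n, rfl⟩ : ∃ n', n = n' + 1 := ⟨n - 1, by omega⟩
    rcases Nat.eq_zero_or_pos k with rfl | hk0
    · simp
    have h1 := ih (n := n) (by omega)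
    have h2 := Nat.add_one_mul_choose_eq n k
    have h3 : (n + 1) ^ k * k ^ k ≤ n ^ k * (k + 1) ^ k := by
      rw [← mul_pow, ← mul_pow]
      exact Nat.pow_le_pow_left (by nlinarith) k
    have h4 : (n + 1) ^ k ≤ (k + 1) ^ k * n.choose k := by
      refine Nat.le_of_mul_le_mul_right ?_ (Nat.pow_pos hk0 : 0 < k ^ k)
      calc _ ≤ n ^ k * (k + 1) ^ k := h3
        _ ≤ (k ^ k * n.choose k) * (k + 1) ^ k := Nat.mul_le_mul_right _ h1
        _ = _ := by ring
    calc (n + 1) ^ (k + 1) = (n + 1) ^ k * (n + 1) := pow_succ _ _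
      _ ≤ (k + 1) ^ k * n.choose k * (n + 1) := Nat.mul_le_mul_right _ h4
      _ = (k + 1) ^ k * ((n + 1) * n.choose k) := by ring
      _ = _ := by rw [h2]; ring

theorem one_le_choose_mul_pow {n k : ℕ} (hk : k ≤ n) {x : ℝ} (hx : (k : ℝ) = n * x) :
    1 ≤ n.choose k * x ^ k := by
  rcases Nat.eq_zero_or_pos n with rfl | hn
  · obtain rfl : k = 0 := by omega
    simp
  have hn' : (0 : ℝ) < n := by exact_mod_cast hn
  have h : (n : ℝ) ^ k ≤ (k : ℝ) ^ k * n.choose k := by exact_mod_cast pow_le_pow_mul_choose hk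
  rw [hx, mul_pow] at h
  refine le_of_mul_le_mul_left ?_ (pow_pos hn' k)
  linarith

theorem continuous_entH : Continuous entH := Real.continuous_negMulLog

theorem HasDerivAt.entH {g : ℝ → ℝ} {g' x : ℝ} (hg : HasDerivAt g g' x) (h0 : g x ≠ 0) :
    HasDerivAt (fun y => entH (g y)) ((-Real.log (g x) - 1) * g') x :=
  (Real.hasDerivAt_negMulLog h0).comp x hg

/-- The exponential growth rate (in `N`) of the expected number of sets of density `x` in
which a proportion `t` of the points is matched internally. -/
noncomputable def rate (d t x : ℝ) : ℝ := d * entF x t + entHH x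

theorem continuous_rate (d t : ℝ) : Continuous (rate d t) := by
  have := continuous_entH
  unfold rate entF entHH
  fun_prop

/-- The derivative of `rate d t` on `(0, t)`. -/
noncomputable def rateDeriv (d t x : ℝ) : ℝ :=
  d * (1 / 2 * ((-Real.log (t * x) - 1) * t) + (-Real.log ((1 - t) * x) - 1) * (1 - t) +
    1 / 2 * ((-Real.log (1 - (2 - t) * x) - 1) * (-(2 - t))) -
    ((-Real.log x - 1) * 1 + (-Real.log (1 - x) - 1) * (-1))) +
  ((-Real.log x - 1) * 1 + (-Real.log (1 - x) - 1) * (-1))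

/-- The second derivative of `rate d t` on `(0, t)`. -/
noncomputable def rateDeriv2 (d t x : ℝ) : ℝ :=
  d * (1 / 2 * (-(t / (t * x)) * t) + -((1 - t) / ((1 - t) * x)) * (1 - t) +
    1 / 2 * (-(-(2 - t) / (1 - (2 - t) * x)) * (-(2 - t))) -
    (-(1 / x) * 1 + -(-1 / (1 - x)) * (-1))) +
  (-(1 / x) * 1 + -(-1 / (1 - x)) * (-1))

section Rate

variable {d t x : ℝ}

theorem one_sub_two_sub_mul_pos (ht1 : t < 1) (hxt : x < t) : 0 < 1 - (2 - t) * x := by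
  nlinarith [mul_pos (sub_pos.2 ht1) (sub_pos.2 ht1)]

theorem hasDerivAt_rate (hx : 0 < x) (hxt : x < t) (ht1 : t < 1) :
    HasDerivAt (rate d t) (rateDeriv d t x) x := by
  have hB := one_sub_two_sub_mul_pos ht1 hxt
  have h1 : HasDerivAt (fun y => t * y) t x := by simpa using (hasDerivAt_id x).const_mul t
  have h2 : HasDerivAt (fun y => (1 - t) * y) (1 - t) x := by
    simpa using (hasDerivAt_id x).const_mul (1 - t)
  have h3 : HasDerivAt (fun y => 1 - (2 - t) * y) (-(2 - t)) x := by
    simpa using ((hasDerivAt_id x).const_mul (2 - t)).const_sub 1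
  have h4 : HasDerivAt (fun y : ℝ => 1 - y) (-1) x := (hasDerivAt_id x).const_sub 1
  have hH := ((hasDerivAt_id x).entH hx.ne').add (h4.entH (by linarith))
  exact (((((h1.entH (by nlinarith)).const_mul (1 / 2)).add (h2.entH (by nlinarith))).add
    ((h3.entH hB.ne').const_mul (1 / 2))).sub hH |>.const_mul d).add hH

theorem hasDerivAt_rateDeriv (hx : 0 < x) (hxt : x < t) (ht1 : t < 1) :
    HasDerivAt (rateDeriv d t) (rateDeriv2 d t x) x := by
  have hB := one_sub_two_sub_mul_pos ht1 hxt
  have h1 : HasDerivAt (fun y => t * y) t x := by simpa using (hasDerivAt_id x).const_mul t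
  have h2 : HasDerivAt (fun y => (1 - t) * y) (1 - t) x := by
    simpa using (hasDerivAt_id x).const_mul (1 - t)
  have h3 : HasDerivAt (fun y => 1 - (2 - t) * y) (-(2 - t)) x := by
    simpa using ((hasDerivAt_id x).const_mul (2 - t)).const_sub 1
  have h4 : HasDerivAt (fun y : ℝ => 1 - y) (-1) x := (hasDerivAt_id x).const_sub 1
  have key : ∀ {g : ℝ → ℝ} {g' : ℝ} (c : ℝ), HasDerivAt g g' x → g x ≠ 0 →
      HasDerivAt (fun y => (-Real.log (g y) - 1) * c) (-(g' / g x) * c) x :=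
    fun c hg h0 => ((hg.log h0).neg.sub_const 1).mul_const c
  have hH := (key 1 (hasDerivAt_id x) hx.ne').add (key (-1) h4 (by linarith))
  exact (((((key t h1 (by nlinarith)).const_mul (1 / 2)).add (key (1 - t) h2 (by nlinarith))).add
    ((key (-(2 - t)) h3 hB.ne').const_mul (1 / 2))).sub hH |>.const_mul d).add hH

theorem rateDeriv2_eq (hx : 0 < x) (hxt : x < t) (ht1 : t < 1) :
    rateDeriv2 d t x = ((d * t / 2 - 1) + x * (d - 1 - d * (2 - t) ^ 2 / 2 -
      (d * t / 2 - 1) * (3 - t))) / (x * (1 - x) * (1 - (2 - t) * x)) := by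
  have hB := (one_sub_two_sub_mul_pos ht1 hxt).ne'
  have h1 : (1 - x) ≠ 0 := by linarith
  have h2 : (1 - t) ≠ 0 := by linarith
  have h3 : t ≠ 0 := by linarith
  have h4 := hx.ne'
  unfold rateDeriv2
  generalize hB' : 1 - (2 - t) * x = B at *
  field_simp
  rw [← hB']
  ring

theorem rate_zero : rate d t 0 = 0 := by simp [rate, entF, entHH, entH]

theorem rate_self_pos (ht : 0 < t) (ht1 : t < 1) : 0 < rate d t t := by
  have h1 : 0 < 1 - t := by linarith
  have e : 1 - (2 - t) * t = (1 - t) * (1 - t) := by ring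
  have hF : entF t t = 0 := by
    simp only [entF, entHH, entH, e, Real.log_mul ht.ne' ht.ne', Real.log_mul h1.ne' ht.ne',
      Real.log_mul h1.ne' h1.ne']
    ring
  have hlog := Real.log_neg ht ht1
  have hlog' := Real.log_neg h1 (by linarith)
  rw [rate, hF, entHH, entH, entH]
  nlinarith [mul_pos ht (neg_pos.2 hlog), mul_pos h1 (neg_pos.2 hlog')]

/-- There is an inflection point below `t`, with the rate function convex before it and
concave after it. -/
theorem exists_convexOn_concaveOn_rate (hd : 0 ≤ d) (ht : 0 < t) (ht1 : t < 1) :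
    ∃ c, 0 ≤ c ∧ c < t ∧ ConvexOn ℝ (Set.Icc 0 c) (rate d t) ∧
      ConcaveOn ℝ (Set.Icc c t) (rate d t) ∧ (d * t ≤ 2 → c = 0) := by
  set a := d * t / 2 - 1 with ha
  set b := d - 1 - d * (2 - t) ^ 2 / 2 - a * (3 - t) with hb
  have hQ : a + t * b < 0 := by
    have : a + t * b = -(1 - t) * (d * t / 2 + (1 - t)) := by rw [hb, ha]; ring
    rw [this]
    have : 0 ≤ d * t := by positivity
    nlinarith
  have hden : ∀ x, 0 < x → x < t → 0 < x * (1 - x) * (1 - (2 - t) * x) := fun x hx hxt =>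
    mul_pos (mul_pos hx (by linarith)) (one_sub_two_sub_mul_pos ht1 hxt)
  have hconv : ∀ c, c ≤ t → (∀ x, 0 < x → x < c → 0 ≤ a + x * b) →
      ConvexOn ℝ (Set.Icc 0 c) (rate d t) := by
    intro c hct hsign
    refine convexOn_of_hasDerivWithinAt2_nonneg (convex_Icc 0 c)
      (f' := rateDeriv d t) (f'' := rateDeriv2 d t) (continuous_rate d t).continuousOn ?_ ?_ ?_ <;>
      rw [interior_Icc] <;> intro x hx
    · exact (hasDerivAt_rate hx.1 (hx.2.trans_le hct) ht1).hasDerivWithinAt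
    · exact (hasDerivAt_rateDeriv hx.1 (hx.2.trans_le hct) ht1).hasDerivWithinAt
    · rw [rateDeriv2_eq hx.1 (hx.2.trans_le hct) ht1]
      exact div_nonneg (hsign x hx.1 hx.2) (hden x hx.1 (hx.2.trans_le hct)).le
  have hconc : ∀ c, 0 ≤ c → (∀ x, c < x → x < t → a + x * b ≤ 0) →
      ConcaveOn ℝ (Set.Icc c t) (rate d t) := by
    intro c hc hsign
    refine concaveOn_of_hasDerivWithinAt2_nonpos (convex_Icc c t)
      (f' := rateDeriv d t) (f'' := rateDeriv2 d t) (continuous_rate d t).continuousOn ?_ ?_ ?_ <;>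
      rw [interior_Icc] <;> intro x hx
    · exact (hasDerivAt_rate (hc.trans_lt hx.1) hx.2 ht1).hasDerivWithinAt
    · exact (hasDerivAt_rateDeriv (hc.trans_lt hx.1) hx.2 ht1).hasDerivWithinAt
    · rw [rateDeriv2_eq (hc.trans_lt hx.1) hx.2 ht1]
      exact div_nonpos_of_nonpos_of_nonneg (hsign x hx.1 hx.2)
        (hden x (hc.trans_lt hx.1) hx.2).le
  rcases le_or_gt a 0 with h | h
  · refine ⟨0, le_rfl, ht, hconv 0 ht.le fun x h1 h2 => absurd h1 h2.not_gt,
      hconc 0 le_rfl fun x h1 h2 => ?_, fun _ => rfl⟩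
    rcases le_or_gt b 0 with hb0 | hb0
    · nlinarith
    · nlinarith
  · have hb0 : b < 0 := by nlinarith
    have hcb : a / -b * b = -a := by
      rw [div_neg, neg_mul, div_mul_cancel₀ _ hb0.ne]
    refine ⟨a / -b, div_nonneg h.le (by linarith), (div_lt_iff₀ (by linarith)).2 (by linarith),
      hconv _ ((div_lt_iff₀ (by linarith)).2 (by linarith)).le fun x _ h2 => ?_,
      hconc _ (div_nonneg h.le (by linarith)) fun x h1 _ => ?_, fun h2 => ?_⟩
    · nlinarith [mul_pos (sub_pos.2 h2) (neg_pos.2 hb0)]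
    · nlinarith [mul_pos (sub_pos.2 h1) (neg_pos.2 hb0)]
    · exact absurd h (by rw [ha]; linarith)

theorem nonneg_of_concaveOn_Icc {f : ℝ → ℝ} {a b y : ℝ} (hf : ConcaveOn ℝ (Set.Icc a b) f)
    (ha : 0 ≤ f a) (hb : 0 ≤ f b) (hay : a ≤ y) (hyb : y ≤ b) : 0 ≤ f y :=
  (le_min ha hb).trans (hf.min_le_of_mem_Icc (Set.left_mem_Icc.2 (hay.trans hyb))
    (Set.right_mem_Icc.2 (hay.trans hyb)) ⟨hay, hyb⟩)

theorem neg_of_convexOn_Icc {f : ℝ → ℝ} {c x y : ℝ} (hf : ConvexOn ℝ (Set.Icc 0 c) f)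
    (h0 : f 0 = 0) (hx : 0 < x) (hxy : x ≤ y) (hyc : y ≤ c) (hy : f y < 0) : f x < 0 := by
  have hy0 : 0 < y := hx.trans_le hxy
  have h := hf.2 (Set.left_mem_Icc.2 (hy0.le.trans hyc)) (show y ∈ Set.Icc 0 c from ⟨hy0.le, hyc⟩)
    (sub_nonneg.2 ((div_le_one hy0).2 hxy)) (div_nonneg hx.le hy0.le) (sub_add_cancel 1 (x / y))
  simp only [smul_eq_mul, mul_zero, zero_add, h0, div_mul_cancel₀ x hy0.ne'] at h
  exact h.trans_lt (mul_neg_of_pos_of_neg (by positivity) hy)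

theorem two_lt_of_rate_neg {x₀ : ℝ} (hd : 0 ≤ d) (hx₀ : 0 < x₀) (hxt : x₀ < t) (ht1 : t < 1)
    (h : rate d t x₀ < 0) : 2 < d * t := by
  obtain ⟨c, -, -, -, hconc, hc⟩ := exists_convexOn_concaveOn_rate hd (hx₀.trans hxt) ht1
  by_contra! hdt
  obtain rfl := hc hdt
  exact h.not_ge (nonneg_of_concaveOn_Icc hconc rate_zero.ge (rate_self_pos (hx₀.trans hxt) ht1).le
    hx₀.le hxt.le)

theorem rate_neg_of_le {x₀ : ℝ} (hd : 0 ≤ d) (hxt : x₀ < t) (ht1 : t < 1)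
    (h : rate d t x₀ < 0) (hx : 0 < x) (hxx₀ : x ≤ x₀) : rate d t x < 0 := by
  have ht : 0 < t := by linarith
  obtain ⟨c, -, hct, hconv, hconc, -⟩ := exists_convexOn_concaveOn_rate hd ht ht1
  have hend := (rate_self_pos (d := d) ht ht1).le
  rcases le_total x₀ c with hc | hc
  · exact neg_of_convexOn_Icc hconv rate_zero hx hxx₀ hc h
  have hstep : ∀ y, c ≤ y → y ≤ x₀ → rate d t y < 0 := fun y hcy hy => by
    by_contra! h0
    exact h.not_ge (nonneg_of_concaveOn_Icc
      (hconc.subset (Set.Icc_subset_Icc_left hcy) (convex_Icc y t)) h0 hend hy hxt.le)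
  rcases le_total x c with hxc | hxc
  · exact neg_of_convexOn_Icc hconv rate_zero hx hxc le_rfl (hstep c le_rfl hc)
  · exact hstep x hxc hxx₀

theorem exists_rate_le_neg {x₀ η : ℝ} (hd : 0 ≤ d) (hxt : x₀ < t) (ht1 : t < 1)
    (h : rate d t x₀ < 0) (hη : 0 < η) :
    ∃ κ > 0, ∀ x, η ≤ x → x ≤ x₀ → rate d t x ≤ -κ := by
  rcases lt_or_ge x₀ η with hlt | hle
  · exact ⟨1, one_pos, fun x h1 h2 => absurd (h1.trans h2) hlt.not_ge⟩
  obtain ⟨y, hy, hmax⟩ := isCompact_Icc.exists_isMaxOn (Set.nonempty_Icc.2 hle)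
    (continuous_rate d t).continuousOn
  exact ⟨-rate d t y, neg_pos.2 (rate_neg_of_le hd hxt ht1 h (hη.trans_le hy.1) hy.2),
    fun x h1 h2 => by rw [neg_neg]; exact hmax ⟨h1, h2⟩⟩

end Rate

theorem pow_mul_one_sub_pow_eq_exp {n k : ℕ} (hk : k ≤ n) {x : ℝ} (hx : 0 < x) (hx1 : x < 1)
    (hkx : (k : ℝ) = n * x) : x ^ k * (1 - x) ^ (n - k) = Real.exp (-(n * entHH x)) := by
  have h1 : 0 < 1 - x := by linarith
  rw [← Real.exp_log (pow_pos hx k), ← Real.exp_log (pow_pos h1 (n - k)), ← Real.exp_add,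
    Real.log_pow, Real.log_pow, Nat.cast_sub hk, hkx, entHH, entH, entH]
  congr 1
  ring

theorem choose_le_exp_entHH {n k : ℕ} (hk : k ≤ n) {x : ℝ} (hx : 0 < x) (hx1 : x < 1)
    (hkx : (k : ℝ) = n * x) : n.choose k ≤ Real.exp (n * entHH x) := by
  have h := choose_mul_pow_mul_pow_le_add_pow n k hk hx.le (sub_nonneg.2 hx1.le)
  rwa [pow_mul_one_sub_pow_eq_exp hk hx hx1 hkx, add_sub_cancel, one_pow, Real.exp_neg,
    ← div_eq_mul_inv, div_le_one (Real.exp_pos _)] at h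

theorem exp_entHH_le_choose {n k : ℕ} (hk : k ≤ n) {x : ℝ} (hx : 0 < x) (hx1 : x < 1)
    (hkx : (k : ℝ) = n * x) : Real.exp (n * entHH x) ≤ (n + 1) * n.choose k := by
  have h := one_le_succ_mul_choose_mul hk hkx
  rwa [pow_mul_one_sub_pow_eq_exp hk hx hx1 hkx, ← mul_assoc, Real.exp_neg, ← div_eq_mul_inv,
    one_le_div (Real.exp_pos _)] at h

section PairsIn

variable {N d m : ℕ}

/-- The number of perfect matchings of `Fin N × Fin d` with at least `s` pairs over `U`. -/
noncomputable def denseCount (N d : ℕ) (U : Finset (Fin N)) (s : ℝ) : ℕ :=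
  Nat.card {P : Set (Sym2 (Fin N × Fin d)) // IsPerfectMatching P ∧ s ≤ pairsIn P (U : Set (Fin N))}

/-- The number of perfect matchings of `Fin N × Fin d`. -/
noncomputable def matchingCount (N d : ℕ) : ℕ :=
  Nat.card {P : Set (Sym2 (Fin N × Fin d)) // IsPerfectMatching P}

theorem denseCount_mul_le (hm : N * d = 2 * m) {q r : ℝ} (hq : 0 < q) (hr : 1 ≤ r)
    (U : Finset (Fin N)) (s : ℝ) :
    denseCount N d U s * ((N * d).choose (#U * d) * (q ^ (#U * d) * r ^ s)) ≤
      matchingCount N d * (1 + 2 * q + q ^ 2 * r) ^ m := by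
  have hpairs : ∀ P : Set (Sym2 (Fin N × Fin d)),
      innerPairs P ((U ×ˢ univ : Finset (Fin N × Fin d)) : Set (Fin N × Fin d)) =
        pairsIn P (U : Set (Fin N)) := fun P => by simp [innerPairs, pairsIn]
  have h := card_matchings_innerPairs_mul_le (α := Fin N × Fin d) (by simpa using hm) hq hr
    (U ×ˢ univ) s
  simp only [hpairs, Finset.card_product, Finset.card_univ, Fintype.card_fin, ← hm] at h
  exact h

theorem choose_mul_denseCount_le_of_small (hm : N * d = 2 * m) (hN : 0 < N) {U : Finset (Fin N)}
    {x : ℝ} (hx : 0 < x) (hUx : (#U : ℝ) = N * x) (s : ℝ) :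
    N.choose #U * denseCount N d U s ≤
      matchingCount N d * (Real.exp (#U * (1 + 3 / 2 * d)) * x ^ (s - #U)) := by
  have hUN : #U ≤ N := by simpa using Finset.card_le_univ U
  have hx1 : x ≤ 1 := by
    have hN' : (0 : ℝ) < N := by exact_mod_cast hN
    have : (#U : ℝ) ≤ N := by exact_mod_cast hUN
    nlinarith
  have hbase := denseCount_mul_le hm hx ((one_le_inv₀ hx).2 hx1) U s
  generalize hu : #U = u at *
  have hk : ((u * d : ℕ) : ℝ) = (N * d : ℕ) * x := by push_cast; rw [hUx]; ring
  have hlow := one_le_choose_mul_pow (Nat.mul_le_mul_right d hUN) hk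
  have hupp : (1 + 2 * x + x ^ 2 * x⁻¹) ^ m ≤ Real.exp (3 / 2 * (u * d)) := by
    have h1 : 1 + 2 * x + x ^ 2 * x⁻¹ = 3 * x + 1 := by field_simp; ring
    have h2 : (2 * m : ℝ) = N * d := by exact_mod_cast hm.symm
    calc _ ≤ Real.exp (3 * x) ^ m := by
          rw [h1]
          exact pow_le_pow_left₀ (by positivity) (Real.add_one_le_exp _) m
      _ = _ := by
          rw [← Real.exp_nat_mul]
          congr 1
          rw [hUx]
          linear_combination (3 / 2 * x) * h2
  have hdense : (denseCount N d U s : ℝ) ≤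
      matchingCount N d * Real.exp (3 / 2 * (u * d)) * x ^ s := by
    rw [Real.inv_rpow hx.le] at hbase
    rw [← div_le_iff₀ (by positivity), div_eq_mul_inv]
    calc _ ≤ (denseCount N d U s * (x ^ s)⁻¹) * ((N * d).choose (u * d) * x ^ (u * d)) :=
          le_mul_of_one_le_right (by positivity) hlow
      _ = denseCount N d U s * ((N * d).choose (u * d) * (x ^ (u * d) * (x ^ s)⁻¹)) := by ring
      _ ≤ _ := hbase.trans (by gcongr)
  have hchoose : N.choose u * x ^ u ≤ Real.exp u := by
    have h := choose_mul_pow_mul_pow_le_add_pow N u hUN hx.le zero_le_one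
    rw [one_pow, mul_one] at h
    refine h.trans ((pow_le_pow_left₀ (by positivity) (Real.add_one_le_exp x) N).trans_eq ?_)
    rw [← Real.exp_nat_mul, ← hUx]
  calc _ ≤ (N.choose u : ℝ) * (matchingCount N d * Real.exp (3 / 2 * (u * d)) * x ^ s) := by
        gcongr
    _ = matchingCount N d *
        ((N.choose u * x ^ u) * Real.exp (3 / 2 * (u * d)) * x ^ (s - u)) := by
        rw [Real.rpow_sub hx, Real.rpow_natCast]
        field_simp
    _ ≤ matchingCount N d * (Real.exp u * Real.exp (3 / 2 * (u * d)) * x ^ (s - u)) := by gcongr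
    _ = _ := by
        rw [← Real.exp_add]
        congr 4
        ring

theorem choose_mul_denseCount_le_of_lt (hm : N * d = 2 * m) {U : Finset (Fin N)}
    {x t : ℝ} (hx : 0 < x) (hUx : (#U : ℝ) = N * x) (hxt : x < t) (ht1 : t < 1) :
    N.choose #U * denseCount N d U (t * d / 2 * #U) ≤
      matchingCount N d * ((N * d + 1) * Real.exp (N * rate d t x)) := by
  have hUN : #U ≤ N := by simpa using Finset.card_le_univ U
  have ht : 0 < t := hx.trans hxt
  have hx1 : x < 1 := by linarith
  have hm' : (m : ℝ) = N * d / 2 := by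
    have : (N * d : ℝ) = 2 * m := by exact_mod_cast hm
    linarith
  obtain ⟨A, hA_def⟩ : ∃ A, A = t * x := ⟨_, rfl⟩
  obtain ⟨B, hB_def⟩ : ∃ B, B = 1 - (2 - t) * x := ⟨_, rfl⟩
  obtain ⟨D, hD_def⟩ : ∃ D, D = (1 - t) * x := ⟨_, rfl⟩
  have hA : 0 < A := hA_def ▸ mul_pos ht hx
  have hB : 0 < B := hB_def ▸ one_sub_two_sub_mul_pos ht1 hxt
  have hD : 0 < D := hD_def ▸ mul_pos (by linarith) hx
  have hr : 1 ≤ A * B / D ^ 2 := by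
    rw [one_le_div (pow_pos hD 2)]
    have : A * B - D ^ 2 = x * (t - x) := by rw [hA_def, hB_def, hD_def]; ring
    nlinarith [mul_pos hx (sub_pos.2 hxt)]
  have hsum : 1 + 2 * (D / B) + (D / B) ^ 2 * (A * B / D ^ 2) = B⁻¹ := by
    have : A + B + 2 * D = 1 := by rw [hA_def, hB_def, hD_def]; ring
    field_simp
    linarith
  have hbase := denseCount_mul_le hm (div_pos hD hB) hr U (t * d / 2 * #U)
  rw [hsum] at hbase
  generalize hu : #U = u at *
  have hk : ((u * d : ℕ) : ℝ) = (N * d : ℕ) * x := by push_cast; rw [hUx]; ring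
  have hchoose := choose_le_exp_entHH hUN hx hx1 hUx
  have hlow := exp_entHH_le_choose (Nat.mul_le_mul_right d hUN) hx hx1 hk
  push_cast at hlow
  have hr0 : 0 < A * B / D ^ 2 := zero_lt_one.trans_le hr
  have hpow : (B⁻¹) ^ m = Real.exp (N * d * entF x t) * Real.exp (N * d * entHH x) *
      ((D / B) ^ (u * d) * (A * B / D ^ 2) ^ (t * d / 2 * u)) := by
    rw [← Real.exp_log (pow_pos (inv_pos.2 hB) m), ← Real.exp_log (pow_pos (div_pos hD hB) (u * d)),
      Real.rpow_def_of_pos hr0, ← Real.exp_add, ← Real.exp_add,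
      ← Real.exp_add, Real.log_pow, Real.log_pow,
      Real.log_inv, Real.log_div hD.ne' hB.ne', Real.log_div (mul_pos hA hB).ne' (pow_pos hD 2).ne',
      Real.log_mul hA.ne' hB.ne', Real.log_pow]
    congr 1
    simp only [entF, entH, ← hA_def, ← hB_def, ← hD_def]
    generalize Real.log A = a, Real.log B = b, Real.log D = c
    rw [hm', hA_def, hB_def, hD_def]
    push_cast
    rw [hUx]
    ring
  have hw : 0 < (D / B) ^ (u * d) * (A * B / D ^ 2) ^ (t * d / 2 * u) :=
    mul_pos (pow_pos (div_pos hD hB) _) (Real.rpow_pos_of_pos hr0 _)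
  generalize (D / B) ^ (u * d) * (A * B / D ^ 2) ^ (t * d / 2 * u) = w at *
  have hdense : (denseCount N d U (t * d / 2 * u) : ℝ) ≤
      matchingCount N d * ((N * d + 1) * Real.exp (N * d * entF x t)) := by
    refine le_of_mul_le_mul_right ?_ (mul_pos (Real.exp_pos (N * d * entHH x)) hw)
    calc _ ≤ (denseCount N d U (t * d / 2 * u) : ℝ) *
          (((N * d + 1) * (N * d).choose (u * d)) * w) := by gcongr
      _ = (N * d + 1) * (denseCount N d U (t * d / 2 * u) * ((N * d).choose (u * d) * w)) := by
          ring
      _ ≤ (N * d + 1) * (matchingCount N d * B⁻¹ ^ m) := by gcongr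
      _ = _ := by rw [hpow]; ring
  calc _ ≤ Real.exp (N * entHH x) *
        (matchingCount N d * ((N * d + 1) * Real.exp (N * d * entF x t))) := by gcongr
    _ = matchingCount N d *
        ((N * d + 1) * (Real.exp (N * entHH x) * Real.exp (N * d * entF x t))) := by ring
    _ = _ := by
        rw [← Real.exp_add, rate]
        congr 3
        ring

end PairsIn

section UnionBound

/-- The number of perfect matchings of `Fin N × Fin d` with more than `t * d / 2 * #U` pairs
over `U`. -/
noncomputable def violatingCount (N d : ℕ) (t : ℝ) (U : Finset (Fin N)) : ℕ :=
  Nat.card {P : Set (Sym2 (Fin N × Fin d)) // IsPerfectMatching P ∧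
    t * d / 2 * #U < pairsIn P (U : Set (Fin N))}

theorem violatingCount_le_denseCount {N d : ℕ} {t s : ℝ} {U : Finset (Fin N)}
    (h : ∀ e : ℕ, t * d / 2 * #U < e → s ≤ e) : violatingCount N d t U ≤ denseCount N d U s :=
  Nat.card_le_card_of_injective (Subtype.map id fun _ hP => ⟨hP.1, h _ hP.2⟩)
    (Subtype.map_injective _ Function.injective_id)

theorem exp_mul_rpow_le {η c D x : ℝ} {u : ℕ} {y : ℝ} (hc : 0 < c)
    (hη : Real.exp D * η ^ (c / 2) ≤ 1 / 4) (hx : 0 < x) (hxη : x ≤ η) (hy : 0 < y)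
    (hu : (u : ℝ) = y * x) :
    Real.exp (u * D) * x ^ (1 / 2 + c / 2 * u) ≤ (1 / 2) ^ u / √y := by
  have h1 : Real.exp (u * D) * x ^ (1 / 2 + c / 2 * u) = (Real.exp D * x ^ (c / 2)) ^ u * √x := by
    rw [Real.rpow_add hx, Real.rpow_mul hx.le, Real.rpow_natCast, ← Real.sqrt_eq_rpow,
      Real.exp_nat_mul, mul_pow]
    ring
  have h2 : Real.exp D * x ^ (c / 2) ≤ 1 / 4 := by
    refine le_trans ?_ hη
    gcongr
  have h3 : √x * √y ≤ 2 ^ u := by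
    rw [← Real.sqrt_mul hx.le, mul_comm x, ← hu]
    refine Real.sqrt_le_iff.2 ⟨by positivity, ?_⟩
    have h4 : (u : ℝ) ≤ 2 ^ u := by exact_mod_cast u.lt_two_pow_self.le
    have h5 : (1 : ℝ) ≤ 2 ^ u := one_le_pow₀ one_le_two
    nlinarith
  rw [h1, le_div_iff₀ (Real.sqrt_pos.2 hy), mul_assoc]
  calc _ ≤ (1 / 4) ^ u * (2 : ℝ) ^ u := by gcongr
    _ = _ := by rw [← mul_pow]; norm_num

theorem exists_choose_mul_violatingCount_le {d : ℕ} {x₀ t₀ : ℝ} (hx₀ : 0 < x₀) (hxt : x₀ < t₀)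
    (ht₀ : t₀ < 1) (hrate : rate d t₀ x₀ < 0) :
    ∃ κ > 0, ∀ N : ℕ, 0 < N → Even (N * d) → ∀ U : Finset (Fin N), U.Nonempty →
      (#U : ℝ) ≤ x₀ * N →
      N.choose #U * violatingCount N d t₀ U ≤
        matchingCount N d * ((1 / 2) ^ #U / √N + (N * d + 1) * Real.exp (-(κ * N))) := by
  have hdt := two_lt_of_rate_neg (Nat.cast_nonneg d) hx₀ hxt ht₀ hrate
  obtain ⟨c, hc⟩ : ∃ c, c = t₀ * d / 2 - 1 := ⟨_, rfl⟩
  have hc0 : 0 < c := by rw [hc]; linarith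
  obtain ⟨η, hη0, hη⟩ : ∃ η : ℝ, 0 < η ∧ Real.exp (1 + 3 / 2 * d) * η ^ (c / 2) ≤ 1 / 4 := by
    refine ⟨(Real.exp (-(1 + 3 / 2 * d)) * (1 / 4)) ^ (c / 2)⁻¹, by positivity, ?_⟩
    rw [Real.rpow_inv_rpow (by positivity) (by positivity), ← mul_assoc, ← Real.exp_add,
      add_neg_cancel, Real.exp_zero, one_mul]
  obtain ⟨κ, hκ, hle⟩ := exists_rate_le_neg (Nat.cast_nonneg d) hxt ht₀ hrate hη0
  refine ⟨κ, hκ, fun N hN hNd U hU hUx₀ => ?_⟩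
  obtain ⟨m, hm⟩ := hNd
  rw [← two_mul] at hm
  have hN' : (0 : ℝ) < N := by exact_mod_cast hN
  have hU0 : (0 : ℝ) < #U := by exact_mod_cast hU.card_pos
  obtain ⟨x, hx, hUx⟩ : ∃ x : ℝ, 0 < x ∧ (#U : ℝ) = N * x :=
    ⟨#U / N, by positivity, by field_simp⟩
  have hxx₀ : x ≤ x₀ := by nlinarith
  rcases le_total x η with hxη | hxη
  · have hs : ∀ e : ℕ, t₀ * d / 2 * #U < e → (#U + (1 / 2 + c / 2 * #U) : ℝ) ≤ e := by
      intro e he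
      have he' : t₀ * d / 2 * #U = #U + c * #U := by rw [hc]; ring
      have h1 : (#U : ℝ) < e := by nlinarith
      have h2 : (#U + 1 : ℝ) ≤ e := by exact_mod_cast h1
      linarith
    calc _ ≤ (N.choose #U : ℝ) * denseCount N d U (#U + (1 / 2 + c / 2 * #U)) := by
          gcongr
          exact violatingCount_le_denseCount hs
      _ ≤ _ := choose_mul_denseCount_le_of_small hm hN hx hUx _
      _ ≤ _ := by
          rw [add_sub_cancel_left]
          refine mul_le_mul_of_nonneg_left ?_ (Nat.cast_nonneg _)
          exact (exp_mul_rpow_le hc0 hη hx hxη hN' hUx).trans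
            (le_add_of_nonneg_right (by positivity))
  · calc _ ≤ (N.choose #U : ℝ) * denseCount N d U (t₀ * d / 2 * #U) := by
          gcongr
          exact violatingCount_le_denseCount fun e he => he.le
      _ ≤ _ := choose_mul_denseCount_le_of_lt hm hx hUx (hxx₀.trans_lt hxt) ht₀
      _ ≤ _ := by
          refine mul_le_mul_of_nonneg_left ?_ (Nat.cast_nonneg _)
          refine le_trans ?_ (le_add_of_nonneg_left (by positivity))
          gcongr
          nlinarith [hle x hxη hxx₀]

theorem sum_le_of_choose_mul_le {N : ℕ} {s : Finset (Finset (Fin N))} {f : Finset (Fin N) → ℝ}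
    {g : ℕ → ℝ} (hg : ∀ u, 0 ≤ g u) (h : ∀ U ∈ s, N.choose #U * f U ≤ g #U) :
    ∑ U ∈ s, f U ≤ ∑ u ∈ range (N + 1), g u := by
  have hpos : ∀ u ≤ N, (0 : ℝ) < N.choose u := fun u hu => by exact_mod_cast Nat.choose_pos hu
  calc ∑ U ∈ s, f U ≤ ∑ U ∈ s, g #U / N.choose #U := Finset.sum_le_sum fun U hU => by
        rw [le_div_iff₀' (hpos _ (by simpa using Finset.card_le_univ U))]
        exact h U hU
    _ ≤ ∑ U ∈ (univ : Finset (Fin N)).powerset, g #U / N.choose #U :=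
        Finset.sum_le_sum_of_subset_of_nonneg (fun U _ => by simp) fun U _ _ =>
          div_nonneg (hg _) (Nat.cast_nonneg _)
    _ = _ := by
        rw [Finset.sum_powerset_apply_card fun u => g u / N.choose u, Finset.card_univ,
          Fintype.card_fin]
        refine Finset.sum_congr rfl fun u hu => ?_
        rw [nsmul_eq_mul, mul_div_cancel₀]
        exact (hpos u (Nat.lt_succ_iff.1 (Finset.mem_range.1 hu))).ne'

theorem matchingCount_le_add_sum (N d : ℕ) (x₀ t₀ : ℝ) :
    (matchingCount N d : ℝ) ≤
      Nat.card {P : Set (Sym2 (Fin N × Fin d)) // IsPerfectMatching P ∧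
        ∀ U : Finset (Fin N), U.Nonempty → (#U : ℝ) ≤ x₀ * N →
          (pairsIn P (U : Set (Fin N)) : ℝ) ≤ (t₀ * d / 2) * #U} +
      ∑ U : Finset (Fin N) with U.Nonempty ∧ (#U : ℝ) ≤ x₀ * N, (violatingCount N d t₀ U : ℝ) := by
  classical
  have hcard : ∀ (p : Set (Sym2 (Fin N × Fin d)) → Prop),
      Nat.card {P // p P} = #{P : Set (Sym2 (Fin N × Fin d)) | p P} :=
    fun p => Nat.subtype_card _ (by simp)
  simp only [matchingCount, violatingCount, hcard]
  norm_cast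
  refine le_trans (Finset.card_le_card fun P hP => ?_) <| (Finset.card_union_le _ _).trans <|
    Nat.add_le_add_left Finset.card_biUnion_le _
  simp only [Finset.mem_filter, Finset.mem_univ, true_and, Finset.mem_union,
    Finset.mem_biUnion] at hP ⊢
  by_contra! hcon
  obtain ⟨U, hU, hUx, hlt⟩ := hcon.1 hP
  exact (hcon.2 U ⟨hU, hUx⟩ hP).not_gt hlt

end UnionBound

theorem tendsto_failure_bound (d : ℕ) {κ : ℝ} (hκ : 0 < κ) :
    Filter.Tendsto (fun N : ℕ => 2 / √N + (N + 1) * ((N * d + 1) * Real.exp (-(κ * N))))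
      Filter.atTop (nhds 0) := by
  have hN : Filter.Tendsto (fun N : ℕ => (N : ℝ)) Filter.atTop Filter.atTop :=
    tendsto_natCast_atTop_atTop
  have hsqrt : Filter.Tendsto (fun N : ℕ => 2 / √(N : ℝ)) Filter.atTop (nhds 0) :=
    (Real.tendsto_sqrt_atTop.comp hN).const_div_atTop 2
  have hpow : ∀ k : ℕ, Filter.Tendsto (fun N : ℕ => (N : ℝ) ^ k * Real.exp (-(κ * N)))
      Filter.atTop (nhds 0) := fun k => by
    have h := ((Real.tendsto_pow_mul_exp_neg_atTop_nhds_zero k).comp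
      (hN.const_mul_atTop hκ)).const_mul (κ ^ k)⁻¹
    rw [mul_zero] at h
    refine h.congr fun N => ?_
    simp only [Function.comp, mul_pow]
    rw [← mul_assoc, inv_mul_cancel_left₀ (pow_pos hκ k).ne']
  have h := hsqrt.add ((((hpow 2).const_mul (d : ℝ)).add ((hpow 1).const_mul (d + 1 : ℝ))).add
    (hpow 0))
  simp only [mul_zero, add_zero] at h
  refine h.congr fun N => ?_
  ring

end

theorem stmt_9 (d : ℕ) (hd : 0 < d) (x₀ t₀ : ℝ) (hx₀ : 0 < x₀) (hxt : x₀ < t₀)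
    (ht₀ : t₀ < 1) (hcond : (d : ℝ) * entF x₀ t₀ + entHH x₀ < 0) :
    ∀ δ : ℝ, 0 < δ → ∃ N₀ : ℕ, ∀ N : ℕ, N₀ ≤ N → Even (N * d) →
      1 - δ <
        (Nat.card {P : Set (Sym2 (Fin N × Fin d)) // IsPerfectMatching P ∧
            ∀ U : Finset (Fin N), U.Nonempty → (U.card : ℝ) ≤ x₀ * N →
              (pairsIn P ↑U : ℝ) ≤ (t₀ * d / 2) * U.card} : ℝ) /
          (Nat.card {P : Set (Sym2 (Fin N × Fin d)) // IsPerfectMatching P} : ℝ) := by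
  have hrate : rate d t₀ x₀ < 0 := hcond
  obtain ⟨κ, hκ, hbound⟩ := exists_choose_mul_violatingCount_le hx₀ hxt ht₀ hrate
  intro δ hδ
  obtain ⟨N₀, hN₀⟩ := Filter.eventually_atTop.1
    ((tendsto_failure_bound d hκ).eventually_lt_const hδ)
  refine ⟨max N₀ 1, fun N hN hNd => ?_⟩
  have hNpos : 0 < N := le_of_max_le_right hN
  have hM : 0 < (matchingCount N d : ℝ) := by
    obtain ⟨P, hP⟩ := exists_isPerfectMatching (α := Fin N × Fin d) (by simpa using hNd)
    have : Nonempty {P : Set (Sym2 (Fin N × Fin d)) // IsPerfectMatching P} := ⟨⟨P, hP⟩⟩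
    exact_mod_cast Nat.card_pos
  have hfail := sum_le_of_choose_mul_le
    (s := {U : Finset (Fin N) | U.Nonempty ∧ (U.card : ℝ) ≤ x₀ * N})
    (f := fun U => (violatingCount N d t₀ U : ℝ)) (g := fun u => (matchingCount N d : ℝ) *
      ((1 / 2) ^ u / √N + (N * d + 1) * Real.exp (-(κ * N)))) (fun u => by positivity)
    fun U hU => hbound N hNpos hNd U (Finset.mem_filter.1 hU).2.1 (Finset.mem_filter.1 hU).2.2
  have hsum : ∑ u ∈ Finset.range (N + 1), (matchingCount N d : ℝ) *
      ((1 / 2) ^ u / √N + (N * d + 1) * Real.exp (-(κ * N))) ≤ matchingCount N d *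
        (2 / √N + (N + 1) * ((N * d + 1) * Real.exp (-(κ * N)))) := by
    rw [← Finset.mul_sum, Finset.sum_add_distrib, ← Finset.sum_div, Finset.sum_const,
      Finset.card_range, nsmul_eq_mul, Nat.cast_add_one]
    gcongr
    exact sum_geometric_two_le _
  have hlt := mul_lt_mul_of_pos_left (hN₀ N (le_of_max_le_left hN)) hM
  have htotal := matchingCount_le_add_sum N d x₀ t₀
  refine (lt_div_iff₀ hM).2 ?_
  linarith
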